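/- arXiv:1204.5836 — 6 statements merged into one kernel-verified Lean document; each statement's English description precedes it below -/
import Mathlib

section
/- Under Assumption A, the set V := K ∖ P_γ is an open subset of K which witnesses the open set condition: γⱼ(V) ∩ γ_k(V) = ∅ for all j ≠ k, and ⋃_{j=1}^N γⱼ(V) ⊆ V. -/
/-!
Openness of `V = K ∖ P_γ` holds because `P_γ` is finite. If `γⱼ(a) = γₖ(b)`, applying `h` gives
`a = b`, so for `j ≠ k` this common value is a branch point and `a ∈ P_γ`, witnessed by the
one-letter word `j`. Finally, if `γⱼ(a) ∈ P_γ` via a word `w`, then `a ∈ P_γ` via `w` followed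
by `j`; contrapositively `γⱼ(V) ⊆ V`.
-/

/-- The branch set `B_γ` of a family of maps `γ`. -/
def branchSet {K : Type*} {N : ℕ} (γ : Fin N → K → K) : Set K :=
  {b | ∃ a, ∃ i j : Fin N, i ≠ j ∧ γ i a = b ∧ γ j a = b}

/-- The composition `γ_{j₁} ∘ ⋯ ∘ γ_{j_k}` associated with a word `w = (j₁, …, j_k)`. -/
def wordComp {K : Type*} {N : ℕ} (γ : Fin N → K → K) {k : ℕ} (w : Fin k → Fin N) (x : K) : K :=
  (List.ofFn w).foldr (fun j z => γ j z) x

/-- The postcritical set `P_γ` of a family of maps `γ`. -/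
def postCritical {K : Type*} {N : ℕ} (γ : Fin N → K → K) : Set K :=
  {a | ∃ k : ℕ, 1 ≤ k ∧ ∃ w : Fin k → Fin N, wordComp γ w a ∈ branchSet γ}

/-- Appending a letter on the right of a word: the new map is applied first. -/
theorem wordComp_snoc {K : Type*} {N : ℕ} (γ : Fin N → K → K) {k : ℕ}
    (w : Fin k → Fin N) (j : Fin N) (x : K) :
    wordComp γ (Fin.snoc (α := fun _ => Fin N) w j) x = wordComp γ w (γ j x) := by
  rw [wordComp, List.ofFn_succ_last]
  simp [wordComp]

/-- Under Assumption A, the set `V := K ∖ P_γ` is open and witnesses the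
open set condition: `γⱼ(V) ∩ γₖ(V) = ∅` for `j ≠ k`, and `⋃ⱼ γⱼ(V) ⊆ V`. -/
theorem open_set_condition_of_assumptionA
    {K : Type*} [MetricSpace K] [CompactSpace K]
    (N : ℕ) (hN : 2 ≤ N)
    (γ : Fin N → K → K)
    (c c' : ℝ) (hc'pos : 0 < c') (hc'c : c' ≤ c) (hc1 : c < 1)
    (hcontr : ∀ (i : Fin N) (x y : K),
      c' * dist x y ≤ dist (γ i x) (γ i y) ∧ dist (γ i x) (γ i y) ≤ c * dist x y)
    (hss : ∀ x : K, ∃ (i : Fin N) (y : K), γ i y = x)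
    (h : K → K) (hh : Continuous h)
    (hhγ : ∀ (y : K) (i : Fin N), h (γ i y) = y)
    (hpre : ∀ y : K, h ⁻¹' {y} = {x | ∃ i : Fin N, γ i y = x})
    (hBfin : (branchSet γ).Finite) (hPfin : (postCritical γ).Finite)
    (hA3 : ∀ b ∈ branchSet γ, ∀ k : ℕ, 1 ≤ k → branchSet γ ∩ h^[k] ⁻¹' {b} = ∅) :
    IsOpen (postCritical γ)ᶜ ∧
      (∀ j k : Fin N, j ≠ k →
        γ j '' (postCritical γ)ᶜ ∩ γ k '' (postCritical γ)ᶜ = ∅) ∧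
      (⋃ j : Fin N, γ j '' (postCritical γ)ᶜ) ⊆ (postCritical γ)ᶜ := by
  refine ⟨hPfin.isClosed.isOpen_compl, ?_, ?_⟩
  · intro j k hjk
    rw [Set.eq_empty_iff_forall_notMem]
    rintro x ⟨⟨a, ha, rfl⟩, b, -, hba⟩
    have hab : b = a := by rw [← hhγ b k, hba, hhγ]
    subst hab
    refine ha ⟨1, le_rfl, fun _ => j, ?_⟩
    exact ⟨b, j, k, hjk, by simp [wordComp], by simp [wordComp, hba]⟩
  · refine Set.iUnion_subset fun j => ?_
    rintro _ ⟨a, ha, rfl⟩ ⟨k, -, w, hw⟩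
    refine ha ⟨k + 1, by omega, Fin.snoc (α := fun _ => Fin N) w j, ?_⟩
    rwa [wordComp_snoc]
end

section
/- Under Assumption A, if a ∈ K satisfies h^n(a) ∉ B_γ for every integer n ≥ 0, then for every integer n ≥ 1 the n-fold preimage of h^n(a) under h has at least N^{n−1} elements: #((h^n)⁻¹({h^n(a)})) ≥ N^{n−1}. -/
section PreimageTree

variable {K : Type*} {N : ℕ} {γ : Fin N → K → K} {h : K → K}

theorem iterate_succ_preimage (hpre : ∀ y : K, h ⁻¹' {y} = {x | ∃ i : Fin N, γ i y = x})
    (m : ℕ) (x : K) : h^[m + 1] ⁻¹' {x} = ⋃ i, h^[m] ⁻¹' {γ i x} := by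
  ext z
  have hz : h^[m] z ∈ h ⁻¹' {x} ↔ ∃ i : Fin N, γ i x = h^[m] z := by rw [hpre]; rfl
  rw [Set.mem_preimage, Function.iterate_succ_apply', ← Set.mem_preimage, hz]
  simp [eq_comm]

theorem finite_iterate_preimage (hpre : ∀ y : K, h ⁻¹' {y} = {x | ∃ i : Fin N, γ i y = x})
    (m : ℕ) (x : K) : (h^[m] ⁻¹' {x}).Finite := by
  induction m generalizing x with
  | zero => simp
  | succ m ih =>
    rw [iterate_succ_preimage hpre]
    exact Set.finite_iUnion fun i => ih _

/-- A point none of whose children is a branch point has `N` distinct children, whose preimage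
trees are disjoint. -/
theorem mul_le_ncard_preimage (hpre : ∀ y : K, h ⁻¹' {y} = {x | ∃ i : Fin N, γ i y = x})
    {m L : ℕ} {x : K} (hx : ∀ i, γ i x ∉ branchSet γ)
    (hL : ∀ i, L ≤ (h^[m] ⁻¹' {γ i x}).ncard) :
    N * L ≤ (h^[m + 1] ⁻¹' {x}).ncard := by
  have hdisj : Pairwise (Function.onFun Disjoint fun i => h^[m] ⁻¹' {γ i x}) := by
    intro i j hij
    refine Set.disjoint_left.2 fun z hzi hzj => hx i ⟨x, i, j, hij, rfl, ?_⟩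
    exact (Set.mem_singleton_iff.1 hzj).symm.trans hzi
  rw [iterate_succ_preimage hpre,
    Set.ncard_iUnion_of_finite (fun i => finite_iterate_preimage hpre m _) hdisj,
    finsum_eq_sum_of_fintype]
  simpa using Finset.card_nsmul_le_sum Finset.univ _ L fun i _ => hL i

/-- A point whose iterated preimages contain no branch point has preimages of full size. -/
theorem pow_le_ncard_preimage (hpre : ∀ y : K, h ⁻¹' {y} = {x | ∃ i : Fin N, γ i y = x})
    (hhγ : ∀ (y : K) (i : Fin N), h (γ i y) = y) (m : ℕ) (x : K)
    (hx : ∀ k, 1 ≤ k → ∀ z, h^[k] z = x → z ∉ branchSet γ) :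
    N ^ m ≤ (h^[m] ⁻¹' {x}).ncard := by
  induction m generalizing x with
  | zero => simp
  | succ m ih =>
    rw [pow_succ']
    refine mul_le_ncard_preimage hpre (fun i => hx 1 le_rfl _ (hhγ x i)) fun i => ih _ ?_
    intro k _ z hz
    refine hx (k + 1) (by omega) z ?_
    rw [Function.iterate_succ_apply', hz, hhγ]

theorem pow_le_ncard_preimage_succ (hN : 2 ≤ N)
    (hpre : ∀ y : K, h ⁻¹' {y} = {x | ∃ i : Fin N, γ i y = x})
    (hhγ : ∀ (y : K) (i : Fin N), h (γ i y) = y)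
    (hA3 : ∀ b ∈ branchSet γ, ∀ k : ℕ, 1 ≤ k → branchSet γ ∩ h^[k] ⁻¹' {b} = ∅)
    (m : ℕ) (x : K) : N ^ m ≤ (h^[m + 1] ⁻¹' {x}).ncard := by
  induction m generalizing x with
  | zero =>
    rw [pow_zero, Nat.one_le_iff_ne_zero, ← Nat.pos_iff_ne_zero,
      Set.ncard_pos (finite_iterate_preimage hpre _ _)]
    exact ⟨γ ⟨0, by omega⟩ x, hhγ x _⟩
  | succ m ih =>
    by_cases hx : ∀ i, γ i x ∉ branchSet γ
    · rw [pow_succ']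
      exact mul_le_ncard_preimage hpre hx fun i => ih _
    · push Not at hx
      obtain ⟨i, hi⟩ := hx
      refine (pow_le_ncard_preimage hpre hhγ (m + 1) (γ i x) ?_).trans
        (Set.ncard_le_ncard ?_ (finite_iterate_preimage hpre _ _))
      · intro k hk z hz hzB
        exact (hA3 _ hi k hk).subset ⟨hzB, hz⟩
      · rw [iterate_succ_preimage hpre (m + 1)]
        exact Set.subset_iUnion (fun i => h^[m + 1] ⁻¹' {γ i x}) i

end PreimageTree

/-- Under Assumption A, if `a ∈ K` satisfies `h^n(a) ∉ B_γ` for every `n ≥ 0`,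
then for every `n ≥ 1` one has `#((h^n)⁻¹({h^n(a)})) ≥ N^{n−1}`. -/
theorem preimage_card_lower_bound
    {K : Type*} [MetricSpace K] [CompactSpace K]
    (N : ℕ) (hN : 2 ≤ N)
    (γ : Fin N → K → K)
    (c c' : ℝ) (hc'pos : 0 < c') (hc'c : c' ≤ c) (hc1 : c < 1)
    (hcontr : ∀ (i : Fin N) (x y : K),
      c' * dist x y ≤ dist (γ i x) (γ i y) ∧ dist (γ i x) (γ i y) ≤ c * dist x y)
    (hss : ∀ x : K, ∃ (i : Fin N) (y : K), γ i y = x)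
    (h : K → K) (hh : Continuous h)
    (hhγ : ∀ (y : K) (i : Fin N), h (γ i y) = y)
    (hpre : ∀ y : K, h ⁻¹' {y} = {x | ∃ i : Fin N, γ i y = x})
    (hBfin : (branchSet γ).Finite) (hPfin : (postCritical γ).Finite)
    (hA3 : ∀ b ∈ branchSet γ, ∀ k : ℕ, 1 ≤ k → branchSet γ ∩ h^[k] ⁻¹' {b} = ∅) :
    ∀ a : K, (∀ n : ℕ, h^[n] a ∉ branchSet γ) →
      ∀ n : ℕ, 1 ≤ n → N ^ (n - 1) ≤ (h^[n] ⁻¹' {h^[n] a}).ncard := by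
  intro a _ n hn
  obtain ⟨m, rfl⟩ : ∃ m, n = m + 1 := ⟨n - 1, by omega⟩
  exact pow_le_ncard_preimage_succ hN hpre hhγ hA3 m _
end

section
/- Under Assumption A, let (μ_n)_{n≥0} be a sequence of finite Borel measures on K such that for every n ≥ 0: μ_{n+1}({h(x)}) = N·μ_n({x}) for every x ∈ K ∖ B_γ, and μ_{n+1}({h(x)}) ≤ N·μ_n({x}) for every x ∈ B_γ. Then μ_0 has no point mass outside the orbit set Orb := ⋃_{b ∈ B_γ} ⋃_{r ≥ 0} (h^r)⁻¹({b}); that is, μ_0({a}) = 0 for every a ∈ K with h^n(a) ∉ B_γ for all n ≥ 0. -/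
/-!
Let `a` have forward orbit disjoint from the branch set. Iterating the point-mass relations gives
`μₙ({hⁿ a}) = Nⁿ μ₀({a})`, and `μₙ({hⁿ x}) ≤ Nⁿ μ₀({x})` for every `x`. Hence `μ₀({a}) ≤ μ₀({x})`
whenever `hⁿ x = hⁿ a` for some `n`.

There are infinitely many such `x`: as `hⁿ a` is not a branch point and `N ≥ 2`, the point
`hⁿ⁺¹ a` has an `h`-preimage other than `hⁿ a`; pulling it back along `hⁿ` yields `xₙ` with
`hⁿ⁺¹ xₙ = hⁿ⁺¹ a` but `hⁿ xₙ ≠ hⁿ a`. The `xₙ` are pairwise distinct, so finiteness of `μ₀`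
forces `μ₀({a}) = 0`.
-/

open MeasureTheory

/-- Under Assumption A, if `(μₙ)` is a sequence of finite Borel measures on `K`
with `μ_{n+1}({h(x)}) = N·μₙ({x})` for `x ∉ B_γ` and `μ_{n+1}({h(x)}) ≤ N·μₙ({x})` for
`x ∈ B_γ`, then `μ₀` has no point mass outside the orbit set
`Orb = ⋃_{b ∈ B_γ} ⋃_{r ≥ 0} (h^r)⁻¹({b})`. -/
theorem no_point_mass_outside_orbit
    {K : Type*} [MetricSpace K] [CompactSpace K]
    [MeasurableSpace K] [BorelSpace K]
    (N : ℕ) (hN : 2 ≤ N)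
    (γ : Fin N → K → K)
    (c c' : ℝ) (hc'pos : 0 < c') (hc'c : c' ≤ c) (hc1 : c < 1)
    (hcontr : ∀ (i : Fin N) (x y : K),
      c' * dist x y ≤ dist (γ i x) (γ i y) ∧ dist (γ i x) (γ i y) ≤ c * dist x y)
    (hss : ∀ x : K, ∃ (i : Fin N) (y : K), γ i y = x)
    (h : K → K) (hh : Continuous h)
    (hhγ : ∀ (y : K) (i : Fin N), h (γ i y) = y)
    (hpre : ∀ y : K, h ⁻¹' {y} = {x | ∃ i : Fin N, γ i y = x})
    (hBfin : (branchSet γ).Finite) (hPfin : (postCritical γ).Finite)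
    (hA3 : ∀ b ∈ branchSet γ, ∀ k : ℕ, 1 ≤ k → branchSet γ ∩ h^[k] ⁻¹' {b} = ∅)
    (μ : ℕ → Measure K) (hfin : ∀ n, IsFiniteMeasure (μ n))
    (heq : ∀ n : ℕ, ∀ x : K, x ∉ branchSet γ → μ (n + 1) {h x} = N * μ n {x})
    (hle : ∀ n : ℕ, ∀ x ∈ branchSet γ, μ (n + 1) {h x} ≤ N * μ n {x}) :
    ∀ a : K, (∀ n : ℕ, h^[n] a ∉ branchSet γ) → μ 0 {a} = 0 := by
  intro a ha
  have : IsFiniteMeasure (μ 0) := hfin 0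
  have h_surj : Function.Surjective h := fun y => ⟨γ ⟨0, by omega⟩ y, hhγ y _⟩
  have h_orbit : ∀ n, μ n {h^[n] a} = (N : ENNReal) ^ n * μ 0 {a} := by
    intro n
    induction n with
    | zero => simp
    | succ n ih =>
      rw [Function.iterate_succ_apply', heq n _ (ha n), ih, pow_succ']
      ring
  have h_bound : ∀ n x, μ n {h^[n] x} ≤ (N : ENNReal) ^ n * μ 0 {x} := by
    intro n x
    induction n with
    | zero => simp
    | succ n ih =>
      rw [Function.iterate_succ_apply']
      have hstep : μ (n + 1) {h (h^[n] x)} ≤ N * μ n {h^[n] x} := by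
        by_cases hx : h^[n] x ∈ branchSet γ
        · exact hle n _ hx
        · exact (heq n _ hx).le
      calc μ (n + 1) {h (h^[n] x)} ≤ N * μ n {h^[n] x} := hstep
        _ ≤ N * ((N : ENNReal) ^ n * μ 0 {x}) := by gcongr
        _ = (N : ENNReal) ^ (n + 1) * μ 0 {x} := by rw [pow_succ']; ring
  have h_mass : ∀ n x, h^[n] x = h^[n] a → μ 0 {a} ≤ μ 0 {x} := by
    intro n x hx
    have hb := h_bound n x
    rw [hx, h_orbit n] at hb
    have hN0 : (N : ENNReal) ≠ 0 := by
      exact_mod_cast (by omega : N ≠ 0)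
    exact (ENNReal.mul_le_mul_iff_right (pow_ne_zero n hN0)
      (ENNReal.pow_ne_top (ENNReal.natCast_ne_top N))).1 hb
  have h_exists : ∀ n, ∃ x, h^[n + 1] x = h^[n + 1] a ∧ h^[n] x ≠ h^[n] a := by
    intro n
    obtain ⟨j, hj⟩ : ∃ j, γ j (h (h^[n] a)) ≠ h^[n] a := by
      by_contra! hall
      -- If every branch sent `hⁿ⁺¹ a` to `hⁿ a`, two of them would, making it a branch point.
      exact ha n ⟨h (h^[n] a), ⟨0, by omega⟩, ⟨1, by omega⟩, by simp, hall _, hall _⟩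
    obtain ⟨x, hx⟩ := h_surj.iterate n (γ j (h (h^[n] a)))
    refine ⟨x, ?_, ?_⟩
    · rw [Function.iterate_succ_apply', Function.iterate_succ_apply', hx, hhγ]
    · rwa [hx]
  choose x hx hxne using h_exists
  have h_ne : ∀ m n, m < n → x m ≠ x n := by
    intro m n hmn heqx
    apply hxne n
    obtain ⟨k, rfl⟩ := Nat.exists_eq_add_of_lt hmn
    rw [← heqx, show m + k + 1 = k + (m + 1) by ring, Function.iterate_add_apply, hx m,
      ← Function.iterate_add_apply]
  by_contra h0
  have hfinite := Measure.finite_const_le_meas_of_disjoint_iUnion (μ 0)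
    (pos_iff_ne_zero.2 h0) (As := fun n => ({x n} : Set K))
    (fun n => measurableSet_singleton _)
    (fun m n hmn => by
      rw [Function.onFun, Set.disjoint_singleton]
      rcases lt_or_gt_of_ne hmn with hlt | hlt
      · exact h_ne m n hlt
      · exact (h_ne n m hlt).symm)
    (measure_ne_top _ _)
  refine Set.infinite_univ (α := ℕ) (hfinite.subset fun n _ => ?_)
  exact h_mass (n + 1) (x n) (hx n)
end

section
/- Under Assumption A, let (μ_n)_{n≥0} be a sequence of finite Borel measures on K such that for every n ≥ 0: μ_{n+1}({h(x)}) = N·μ_n({x}) for every x ∈ K ∖ B_γ, and μ_{n+1}({h(x)}) ≤ N·μ_n({x}) for every x ∈ B_γ. Then for every b ∈ B_γ, every integer r ≥ 0, and every x ∈ (h^r)⁻¹({b}), one has N^r·μ_0({x}) = μ_r({b}); in particular μ_0({x}) = μ_0({x'}) for all x, x' ∈ (h^r)⁻¹({b}). -/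
/-!
By condition (3) of Assumption A, no point of a backward orbit of `b ∈ B_γ`, other than `b`
itself, lies in `B_γ`. Hence along `x, h x, …, h^r x = b` each step falls under the equality
`μ_{n+1}({h y}) = N·μ_n({y})`, and multiplying these relations gives `N^r·μ_0({x}) = μ_r({b})`
(`pow_mul_mass_eq`). Cancelling `N^r` gives the equality of masses over the fibre.
-/

open MeasureTheory

/-- If the strict backward orbit of `b` avoids `B`, the one-step mass relation off `B` iterates.
The starting index `n` is arbitrary so that the induction can pass from `x` to `h x`, which
shifts the sequence of measures by one. -/
lemma pow_mul_mass_eq {K : Type*} [MeasurableSpace K] {N : ℕ} (h : K → K) (B : Set K)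
    (μ : ℕ → Measure K)
    (heq : ∀ n : ℕ, ∀ x : K, x ∉ B → μ (n + 1) {h x} = N * μ n {x})
    (b : K) (hb : ∀ k : ℕ, 1 ≤ k → ∀ x ∈ h^[k] ⁻¹' {b}, x ∉ B) (r n : ℕ) :
    ∀ x ∈ h^[r] ⁻¹' {b}, (N : ENNReal) ^ r * μ n {x} = μ (n + r) {b} := by
  induction r generalizing n with
  | zero =>
    rintro x rfl
    simp
  | succ k ih =>
    intro x hx
    have hstep := ih (n + 1) (h x) hx
    rw [heq n x (hb (k + 1) (Nat.le_add_left 1 k) x hx), ← mul_assoc, ← pow_succ] at hstep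
    rw [hstep, Nat.add_right_comm, Nat.add_assoc]

/-- Under Assumption A, if `(μₙ)` is a sequence of finite Borel measures on `K`
with `μ_{n+1}({h(x)}) = N·μₙ({x})` for `x ∉ B_γ` and `μ_{n+1}({h(x)}) ≤ N·μₙ({x})` for
`x ∈ B_γ`, then for every `b ∈ B_γ`, `r ≥ 0`, and `x ∈ (h^r)⁻¹({b})`, one has
`N^r·μ₀({x}) = μ_r({b})`; in particular `μ₀({x}) = μ₀({x'})` for `x, x' ∈ (h^r)⁻¹({b})`. -/
theorem point_mass_on_backward_orbit
    {K : Type*} [MetricSpace K] [CompactSpace K]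
    [MeasurableSpace K] [BorelSpace K]
    (N : ℕ) (hN : 2 ≤ N)
    (γ : Fin N → K → K)
    (c c' : ℝ) (hc'pos : 0 < c') (hc'c : c' ≤ c) (hc1 : c < 1)
    (hcontr : ∀ (i : Fin N) (x y : K),
      c' * dist x y ≤ dist (γ i x) (γ i y) ∧ dist (γ i x) (γ i y) ≤ c * dist x y)
    (hss : ∀ x : K, ∃ (i : Fin N) (y : K), γ i y = x)
    (h : K → K) (hh : Continuous h)
    (hhγ : ∀ (y : K) (i : Fin N), h (γ i y) = y)
    (hpre : ∀ y : K, h ⁻¹' {y} = {x | ∃ i : Fin N, γ i y = x})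
    (hBfin : (branchSet γ).Finite) (hPfin : (postCritical γ).Finite)
    (hA3 : ∀ b ∈ branchSet γ, ∀ k : ℕ, 1 ≤ k → branchSet γ ∩ h^[k] ⁻¹' {b} = ∅)
    (μ : ℕ → Measure K) (hfin : ∀ n, IsFiniteMeasure (μ n))
    (heq : ∀ n : ℕ, ∀ x : K, x ∉ branchSet γ → μ (n + 1) {h x} = N * μ n {x})
    (hle : ∀ n : ℕ, ∀ x ∈ branchSet γ, μ (n + 1) {h x} ≤ N * μ n {x}) :
    ∀ b ∈ branchSet γ, ∀ r : ℕ,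
      (∀ x ∈ h^[r] ⁻¹' {b}, (N : ENNReal) ^ r * μ 0 {x} = μ r {b}) ∧
      ∀ x ∈ h^[r] ⁻¹' {b}, ∀ x' ∈ h^[r] ⁻¹' {b}, μ 0 {x} = μ 0 {x'} := by
  intro b hb r
  have key := pow_mul_mass_eq h (branchSet γ) μ heq b
    (fun k hk x hx hxB => (Set.ext_iff.mp (hA3 b hb k hk) x).mp ⟨hxB, hx⟩) r 0
  rw [Nat.zero_add] at key
  refine ⟨key, fun x hx x' hx' => ?_⟩
  have hN0 : (N : ENNReal) ^ r ≠ 0 := pow_ne_zero _ (by exact_mod_cast (by omega : N ≠ 0))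
  have hNtop : (N : ENNReal) ^ r ≠ ⊤ := ENNReal.pow_ne_top (ENNReal.natCast_ne_top N)
  exact (ENNReal.mul_right_inj hN0 hNtop).mp ((key x hx).trans (key x' hx').symm)
end

section
/- The dual map G* is a proper contraction of the space of Borel probability measures on K with respect to the Kantorovich–Lipschitz distance: for all Borel probability measures μ, ν on K, L(G*(μ), G*(ν)) ≤ c·L(μ,ν), where L(μ,ν) := sup{ |∫_K a dμ − ∫_K a dν| : a : K → ℝ is 1-Lipschitz } (this supremum is finite since K is compact: the value of |∫a dμ − ∫a dν| is unchanged by adding constants to a, so one may restrict to 1-Lipschitz a bounded by the diameter of K). -/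
/-! If `a` is `1`-Lipschitz then each `a ∘ γⱼ` is `c`-Lipschitz, so its integrals against `μ`
and `ν` differ by at most `c * Ldist μ ν` (`abs_integral_sub_le_mul_Ldist`). The integral of `a`
against `Gstar γ μ` is the average over `j` of the integrals of `a ∘ γⱼ` against `μ`
(`integral_Gstar`), so averaging these estimates and taking the supremum over `a` gives the
contraction. Since `Ldist` is a real `sSup`, it dominates the members of its defining set only
because that set is bounded (`bddAbove_Ldist`), by compactness of `K`. -/

open MeasureTheory
open scoped BigOperators ENNReal

/-- The dual map `G*(μ) = (1/N)·Σⱼ (γⱼ)_*μ` on Borel measures. -/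
noncomputable def Gstar {K : Type*} [MeasurableSpace K] {N : ℕ} (γ : Fin N → K → K)
    (μ : Measure K) : Measure K :=
  (N : ℝ≥0∞)⁻¹ • ∑ j : Fin N, Measure.map (γ j) μ

/-- The Kantorovich–Lipschitz distance
`L(μ,ν) = sup { |∫ a dμ − ∫ a dν| : a 1-Lipschitz }`. -/
noncomputable def Ldist {K : Type*} [MetricSpace K] [MeasurableSpace K]
    (μ ν : Measure K) : ℝ :=
  sSup {r : ℝ | ∃ a : K → ℝ, LipschitzWith 1 a ∧ r = |∫ x, a x ∂μ - ∫ x, a x ∂ν|}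

theorem integrable_of_lipschitz {K : Type*} [MetricSpace K] [CompactSpace K]
    [MeasurableSpace K] [BorelSpace K] {C : NNReal} {a : K → ℝ} (ha : LipschitzWith C a)
    (μ : Measure K) [IsFiniteMeasure μ] : Integrable a μ :=
  ha.continuous.integrable_of_hasCompactSupport (HasCompactSupport.of_compactSpace a)

theorem integral_Gstar {K : Type*} [MetricSpace K] [CompactSpace K]
    [MeasurableSpace K] [BorelSpace K] {N : ℕ} {γ : Fin N → K → K}
    (hγ : ∀ j, Continuous (γ j)) {C : NNReal} {a : K → ℝ} (ha : LipschitzWith C a)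
    (μ : Measure K) [IsFiniteMeasure μ] :
    ∫ x, a x ∂(Gstar γ μ) = (N : ℝ)⁻¹ * ∑ j, ∫ x, a (γ j x) ∂μ := by
  unfold Gstar
  rw [integral_smul_measure, integral_finsetSum_measure]
  · simp only [ENNReal.toReal_inv, ENNReal.toReal_natCast, smul_eq_mul]
    congr 1
    refine Finset.sum_congr rfl fun j _ => ?_
    exact integral_map (hγ j).measurable.aemeasurable ha.continuous.aestronglyMeasurable
  · intro j _
    exact integrable_of_lipschitz ha _

/-- The supremum defining `Ldist μ ν` is taken over a bounded set: subtracting the value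
`a x₀` from `a` does not change the difference of the integrals, and `|a - a x₀|` is at most
the diameter of `K`. -/
theorem bddAbove_Ldist {K : Type*} [MetricSpace K] [CompactSpace K]
    [MeasurableSpace K] [BorelSpace K] (μ ν : Measure K)
    [IsProbabilityMeasure μ] [IsProbabilityMeasure ν] :
    BddAbove {r : ℝ | ∃ a : K → ℝ, LipschitzWith 1 a ∧
      r = |∫ x, a x ∂μ - ∫ x, a x ∂ν|} := by
  obtain ⟨x₀⟩ : Nonempty K := nonempty_of_isProbabilityMeasure μ
  refine ⟨2 * Metric.diam (Set.univ : Set K), ?_⟩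
  rintro r ⟨a, ha, rfl⟩
  have key : ∀ ρ : Measure K, IsProbabilityMeasure ρ →
      |∫ x, a x ∂ρ - a x₀| ≤ Metric.diam (Set.univ : Set K) := by
    intro ρ _
    have h1 : ∫ x, a x ∂ρ - a x₀ = ∫ x, (a x - a x₀) ∂ρ := by
      rw [integral_sub (integrable_of_lipschitz ha ρ) (integrable_const _)]
      simp
    have h2 := norm_integral_le_of_norm_le_const (μ := ρ) (f := fun x => a x - a x₀)
      (C := Metric.diam (Set.univ : Set K)) (Filter.Eventually.of_forall fun x => by
        have h3 := ha.dist_le_mul x x₀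
        rw [Real.dist_eq, NNReal.coe_one, one_mul] at h3
        exact h3.trans (Metric.dist_le_diam_of_mem isCompact_univ.isBounded
          (Set.mem_univ _) (Set.mem_univ _)))
    rw [h1]
    simpa using h2
  have hμ := abs_le.1 (key μ inferInstance)
  have hν := abs_le.1 (key ν inferInstance)
  rw [abs_le]
  constructor <;> linarith [hμ.1, hμ.2, hν.1, hν.2]

/-- Scaling: the bound by `Ldist` for `1`-Lipschitz functions extends to `c`-Lipschitz ones. -/
theorem abs_integral_sub_le_mul_Ldist {K : Type*} [MetricSpace K] [CompactSpace K]
    [MeasurableSpace K] [BorelSpace K] (μ ν : Measure K)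
    [IsProbabilityMeasure μ] [IsProbabilityMeasure ν] {c : ℝ} (hc : 0 < c) {b : K → ℝ}
    (hb : ∀ x y, dist (b x) (b y) ≤ c * dist x y) :
    |∫ x, b x ∂μ - ∫ x, b x ∂ν| ≤ c * Ldist μ ν := by
  have hlip : LipschitzWith 1 fun x => c⁻¹ * b x := by
    refine LipschitzWith.of_dist_le_mul fun x y => ?_
    rw [Real.dist_eq, ← mul_sub, abs_mul, abs_of_pos (inv_pos.2 hc), NNReal.coe_one, one_mul,
      inv_mul_le_iff₀ hc]
    exact hb x y
  have h : |∫ x, c⁻¹ * b x ∂μ - ∫ x, c⁻¹ * b x ∂ν| ≤ Ldist μ ν :=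
    le_csSup (bddAbove_Ldist μ ν) ⟨_, hlip, rfl⟩
  rwa [integral_const_mul, integral_const_mul, ← mul_sub, abs_mul, abs_of_pos (inv_pos.2 hc),
    inv_mul_le_iff₀ hc] at h

/-- `G*` is a proper contraction of the space of Borel probability measures
on `K` with respect to the Kantorovich–Lipschitz distance: `L(G*(μ), G*(ν)) ≤ c·L(μ,ν)`. -/
theorem Gstar_contraction
    {K : Type*} [MetricSpace K] [CompactSpace K]
    [MeasurableSpace K] [BorelSpace K]
    (N : ℕ) (hN : 2 ≤ N)
    (γ : Fin N → K → K)
    (c c' : ℝ) (hc'pos : 0 < c') (hc'c : c' ≤ c) (hc1 : c < 1)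
    (hcontr : ∀ (i : Fin N) (x y : K),
      c' * dist x y ≤ dist (γ i x) (γ i y) ∧ dist (γ i x) (γ i y) ≤ c * dist x y)
    (hss : ∀ x : K, ∃ (i : Fin N) (y : K), γ i y = x) :
    ∀ μ ν : Measure K, IsProbabilityMeasure μ → IsProbabilityMeasure ν →
      Ldist (Gstar γ μ) (Gstar γ ν) ≤ c * Ldist μ ν := by
  intro μ ν _ _
  have hc : 0 < c := hc'pos.trans_le hc'c
  have hN0 : (0 : ℝ) < N := by exact_mod_cast (by omega : 0 < N)
  have hγ : ∀ j, Continuous (γ j) := fun j =>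
    (LipschitzWith.of_dist_le_mul (K := ⟨c, hc.le⟩) fun x y => (hcontr j x y).2).continuous
  refine csSup_le ⟨_, fun _ => 0, LipschitzWith.const' 0, rfl⟩ ?_
  rintro r ⟨a, ha, rfl⟩
  rw [integral_Gstar hγ ha, integral_Gstar hγ ha, ← mul_sub, ← Finset.sum_sub_distrib, abs_mul,
    abs_of_pos (inv_pos.2 hN0), inv_mul_le_iff₀ hN0]
  calc |∑ j, (∫ x, a (γ j x) ∂μ - ∫ x, a (γ j x) ∂ν)|
      ≤ ∑ j, |∫ x, a (γ j x) ∂μ - ∫ x, a (γ j x) ∂ν| := Finset.abs_sum_le_sum_abs _ _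
    _ ≤ ∑ _j : Fin N, c * Ldist μ ν := by
        refine Finset.sum_le_sum fun j _ => abs_integral_sub_le_mul_Ldist μ ν hc fun x y => ?_
        have h := ha.dist_le_mul (γ j x) (γ j y)
        rw [NNReal.coe_one, one_mul] at h
        exact h.trans (hcontr j x y).2
    _ = N * (c * Ldist μ ν) := by simp
end

section
/- Let A be a unital C*-algebra, B a closed *-subalgebra of A containing the unit, and I a closed two-sided ideal of A such that A = B + I. Let τ be a finite trace on B and φ a finite trace on I, and suppose: (1) φ(x) = τ(x) for every x ∈ B ∩ I; and (2) φ(x^{1/2}·u·x^{1/2}) ≤ τ(x) for every positive x ∈ B and every u ∈ I with 0 ≤ u ≤ 1 (this encodes that the canonical extension φ̄ of φ to A satisfies φ̄ ≤ τ on positive elements of B). Then there exists a unique finite trace σ on A whose restriction to B is τ and whose restriction to I is φ. Conversely, if σ is a finite trace on A, then its restrictions τ = σ|_B and φ = σ|_I satisfy conditions (1) and (2). -/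
/-!
By `A = B + I` and condition (1), the formula `σ (b + i) = τ b + φ i` is the only candidate, and it
is well defined and linear. Everything else rests on one approximation fact
(`exists_right_approx`): for `x ∈ I` and `ε > 0` there is `e ∈ I` with `0 ≤ e ≤ 1` and
`‖x - x * e‖ ≤ ε`, namely `e = x⋆x (δ + x⋆x)⁻¹`. It has three consequences:

* `I` is closed under the adjoint (`ideal_star_mem`), since `x⋆` is the limit of `e * x⋆ ∈ I`;
* `φ (a * i) = φ (i * a)` for every `a ∈ A` and `i ∈ I` (`trace_ideal_comm`), since `i` may be
  replaced by `i * e`, and then `φ (a i e) = φ (e a i) = φ (i e a)`; so `σ` is tracial;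
* `σ` is positive: write `a = b + i` and `a⋆a = b⋆b + c` with `c ∈ I`, and pick `e` for `c`.
  With `x = b⋆b` and `u = e ^ 2`, condition (2) says `τ (b⋆b) ≥ φ (e b⋆b e)`, whence
  `σ (a⋆a) ≥ φ (e a⋆a e) + (φ c - φ (e c e)) ≥ φ c - φ (c e²)`, and the last difference is
  arbitrarily small.

Boundedness of `σ` is automatic, as positive functionals on a C⋆-algebra are bounded.
Conversely, for a trace `σ` on `A`, condition (2) follows from
`x^{1/2} (1 - u) x^{1/2} ≥ 0`.
-/


/-- A finite trace on a subset `S` of a C*-algebra `A`, modelled as a function `A → ℂ` which is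
linear, bounded, positive and tracial on `S`. -/
def IsFiniteTraceOn {A : Type*} [CStarAlgebra A] (S : Set A) (f : A → ℂ) : Prop :=
  (∀ x ∈ S, ∀ y ∈ S, f (x + y) = f x + f y) ∧
  (∀ z : ℂ, ∀ x ∈ S, f (z • x) = z * f x) ∧
  (∃ M : ℝ, ∀ x ∈ S, ‖f x‖ ≤ M * ‖x‖) ∧
  (∀ x ∈ S, 0 ≤ (f (star x * x)).re ∧ (f (star x * x)).im = 0) ∧
  (∀ x ∈ S, ∀ y ∈ S, f (x * y) = f (y * x))

/-- Right approximate units for single elements of an ideal: `e = x⋆x (δ + x⋆x)⁻¹` with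
`δ = ε ^ 2` satisfies `(x - x e)⋆ (x - x e) = f (x⋆x)` for `f t = t δ² / (δ + t)² ≤ δ`. -/
theorem exists_right_approx {A : Type*} [CStarAlgebra A] [PartialOrder A] [StarOrderedRing A]
    (I : Set A) (hIabs : ∀ a ∈ I, ∀ x : A, x * a ∈ I ∧ a * x ∈ I)
    {x : A} (hx : x ∈ I) {ε : ℝ} (hε : 0 < ε) :
    ∃ e ∈ I, 0 ≤ e ∧ e ≤ 1 ∧ ‖x - x * e‖ ≤ ε := by
  set a : A := star x * x with ha
  have ha0 : 0 ≤ a := star_mul_self_nonneg x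
  have hsa : IsSelfAdjoint a := ha0.isSelfAdjoint
  have hspec : ∀ t ∈ spectrum ℝ a, 0 ≤ t := fun t ht => spectrum_nonneg_of_nonneg ha0 ht
  have hδ : 0 < ε ^ 2 := by positivity
  have hne : ∀ t ∈ spectrum ℝ a, ε ^ 2 + t ≠ 0 := fun t ht => by
    have := hspec t ht
    positivity
  have hcg : ContinuousOn (fun t : ℝ => (ε ^ 2 + t)⁻¹) (spectrum ℝ a) :=
    ContinuousOn.inv₀ (by fun_prop) hne
  have hcf : ContinuousOn (fun t : ℝ => t * (ε ^ 2 + t)⁻¹) (spectrum ℝ a) :=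
    continuousOn_id.mul hcg
  set e : A := cfc (fun t : ℝ => t * (ε ^ 2 + t)⁻¹) a with he
  have he_mul : e = a * cfc (fun t : ℝ => (ε ^ 2 + t)⁻¹) a := by
    rw [he, cfc_mul (fun t : ℝ => t) (fun t : ℝ => (ε ^ 2 + t)⁻¹) a (by fun_prop) hcg, cfc_id' ℝ a]
  have he0 : 0 ≤ e := cfc_nonneg fun t ht => by
    have := hspec t ht
    positivity
  have he1 : e ≤ 1 := cfc_le_one _ _ fun t ht => by
    have := hspec t ht
    rw [← div_eq_mul_inv, div_le_one (by positivity)]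
    linarith
  refine ⟨e, ?_, he0, he1, ?_⟩
  · rw [he_mul]
    exact (hIabs _ (hIabs x hx (star x)).1 _).2
  · have h1e : 1 - e = cfc (fun t : ℝ => 1 - t * (ε ^ 2 + t)⁻¹) a := by
      rw [cfc_sub (fun _ : ℝ => (1 : ℝ)) _ a (by fun_prop) hcf, cfc_const_one ℝ a]
    have hc1 : ContinuousOn (fun t : ℝ => 1 - t * (ε ^ 2 + t)⁻¹) (spectrum ℝ a) :=
      continuousOn_const.sub hcf
    have key : star (x - x * e) * (x - x * e) =
        cfc (fun t : ℝ => (1 - t * (ε ^ 2 + t)⁻¹) * t * (1 - t * (ε ^ 2 + t)⁻¹)) a := by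
      rw [cfc_mul _ _ a (hc1.fun_mul (continuousOn_id' _)) hc1,
        cfc_mul _ _ a hc1 (continuousOn_id' _),
        cfc_id' ℝ a, ← h1e, ha]
      simp only [star_sub, star_mul, he0.isSelfAdjoint.star_eq]
      noncomm_ring
    have hle : ‖star (x - x * e) * (x - x * e)‖ ≤ ε ^ 2 := by
      rw [key]
      refine norm_cfc_le hδ.le fun t ht => ?_
      have ht0 := hspec t ht
      have hp : 0 < ε ^ 2 + t := by positivity
      have heq : (1 - t * (ε ^ 2 + t)⁻¹) * t * (1 - t * (ε ^ 2 + t)⁻¹) =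
          t * (ε ^ 2) ^ 2 / (ε ^ 2 + t) ^ 2 := by
        field_simp
        ring
      rw [heq, Real.norm_of_nonneg (by positivity), div_le_iff₀ (by positivity)]
      have h3 : 0 ≤ ε ^ 2 * ((ε ^ 2) ^ 2 + ε ^ 2 * t + t ^ 2) := by positivity
      nlinarith [h3]
    rw [CStarRing.norm_star_mul_self, ← sq] at hle
    exact (sq_le_sq₀ (norm_nonneg _) hε.le).1 hle

theorem ideal_star_mem {A : Type*} [CStarAlgebra A] [PartialOrder A] [StarOrderedRing A]
    (I : Set A) (hIclosed : IsClosed I)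
    (hIabs : ∀ a ∈ I, ∀ x : A, x * a ∈ I ∧ a * x ∈ I)
    {x : A} (hx : x ∈ I) : star x ∈ I := by
  rw [← hIclosed.closure_eq]
  refine Metric.mem_closure_iff.2 fun ε hε => ?_
  obtain ⟨e, heI, he0, -, he⟩ := exists_right_approx I hIabs hx (half_pos hε)
  refine ⟨e * star x, (hIabs e heI _).2, ?_⟩
  have : star x - e * star x = star (x - x * e) := by
    simp [he0.isSelfAdjoint.star_eq]
  rw [dist_eq_norm, this, norm_star]
  linarith

theorem IsFiniteTraceOn.map_sub {A : Type*} [CStarAlgebra A] {S : Set A} {f : A → ℂ}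
    (hf : IsFiniteTraceOn S f) (hsmul : ∀ z : ℂ, ∀ x ∈ S, z • x ∈ S)
    {x y : A} (hx : x ∈ S) (hy : y ∈ S) : f (x - y) = f x - f y := by
  have h : x - y = x + (-1 : ℂ) • y := by rw [neg_one_smul, sub_eq_add_neg]
  rw [h, hf.1 x hx _ (hsmul _ y hy), hf.2.1 _ y hy]
  ring

/-- A trace on a closed ideal is invariant under commutation with elements of the whole algebra. -/
theorem trace_ideal_comm {A : Type*} [CStarAlgebra A] [PartialOrder A] [StarOrderedRing A]
    (I : Set A) (hIadd : ∀ x ∈ I, ∀ y ∈ I, x + y ∈ I)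
    (hIsmul : ∀ z : ℂ, ∀ x ∈ I, z • x ∈ I)
    (hIabs : ∀ a ∈ I, ∀ x : A, x * a ∈ I ∧ a * x ∈ I)
    {φ : A → ℂ} (hφ : IsFiniteTraceOn I φ) (a : A) {i : A} (hi : i ∈ I) :
    φ (a * i) = φ (i * a) := by
  obtain ⟨M, hM⟩ := hφ.2.2.1
  have hsub : ∀ x ∈ I, ∀ y ∈ I, x - y ∈ I := fun x hx y hy => by
    rw [sub_eq_add_neg, ← neg_one_smul ℂ y]
    exact hIadd x hx _ (hIsmul _ y hy)
  -- `φ (a * i) - φ (i * a)` depends on `i` only through `i - i * e`.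
  have hbound : ∀ ε > 0, ‖φ (a * i) - φ (i * a)‖ ≤ 2 * |M| * ‖a‖ * ε := by
    intro ε hε
    obtain ⟨e, he, -, -, hle⟩ := exists_right_approx I hIabs hi hε
    have hie : i * e ∈ I := (hIabs e he i).1
    have hd : i - i * e ∈ I := hsub i hi _ hie
    have hcomm : φ (a * (i * e)) = φ (i * e * a) := by
      rw [← mul_assoc, hφ.2.2.2.2 _ (hIabs i hi a).1 e he, ← mul_assoc,
        hφ.2.2.2.2 _ (hIabs e he a).2 i hi, ← mul_assoc]
    have hrw : φ (a * i) - φ (i * a) = φ (a * (i - i * e)) - φ ((i - i * e) * a) := by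
      rw [mul_sub, sub_mul, hφ.map_sub hIsmul (hIabs i hi a).1 (hIabs _ hie a).1,
        hφ.map_sub hIsmul (hIabs i hi a).2 (hIabs _ hie a).2, hcomm]
      ring
    have hb : ∀ y ∈ I, ‖y‖ ≤ ‖a‖ * ε → ‖φ y‖ ≤ |M| * (‖a‖ * ε) := fun y hy hn =>
      (hM y hy).trans (mul_le_mul (le_abs_self M) hn (norm_nonneg _) (abs_nonneg _))
    have h1 := hb _ (hIabs _ hd a).1
      ((norm_mul_le _ _).trans (mul_le_mul_of_nonneg_left hle (norm_nonneg _)))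
    have h2 := hb _ (hIabs _ hd a).2
      ((norm_mul_le _ _).trans (by rw [mul_comm]; exact mul_le_mul_of_nonneg_left hle (norm_nonneg _)))
    rw [hrw]
    refine (norm_sub_le _ _).trans ?_
    linarith
  have hle : ‖φ (a * i) - φ (i * a)‖ ≤ 0 := by
    refine le_of_forall_pos_le_add fun ε hε => ?_
    have hK : 0 < 2 * |M| * ‖a‖ + 1 := by positivity
    refine (hbound (ε / (2 * |M| * ‖a‖ + 1)) (div_pos hε hK)).trans ?_
    rw [zero_add, ← mul_div_assoc, div_le_iff₀ hK]
    nlinarith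
  exact sub_eq_zero.1 (norm_le_zero_iff.1 hle)

/-- A trace on a closed ideal is approximated on `c ∈ I` by its compressions `φ (e * c * e)`,
with `e` a positive contraction of the ideal. -/
theorem exists_compression_approx {A : Type*} [CStarAlgebra A] [PartialOrder A] [StarOrderedRing A]
    (I : Set A) (hIadd : ∀ x ∈ I, ∀ y ∈ I, x + y ∈ I)
    (hIsmul : ∀ z : ℂ, ∀ x ∈ I, z • x ∈ I)
    (hIabs : ∀ a ∈ I, ∀ x : A, x * a ∈ I ∧ a * x ∈ I)
    {φ : A → ℂ} (hφ : IsFiniteTraceOn I φ) {c : A} (hc : c ∈ I) {ε : ℝ} (hε : 0 < ε) :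
    ∃ e ∈ I, 0 ≤ e ∧ e ≤ 1 ∧ ‖φ c - φ (e * c * e)‖ ≤ ε := by
  obtain ⟨M, hM⟩ := hφ.2.2.1
  have hK : 0 < 2 * |M| + 1 := by positivity
  obtain ⟨e, he, he0, he1, hle⟩ := exists_right_approx I hIabs hc (div_pos hε hK)
  refine ⟨e, he, he0, he1, ?_⟩
  have hce : c * e ∈ I := (hIabs e he c).1
  have hcee : c * e * e ∈ I := (hIabs e he _).1
  have hsub : c - c * e * e ∈ I := by
    rw [sub_eq_add_neg, ← neg_one_smul ℂ (c * e * e)]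
    exact hIadd c hc _ (hIsmul _ _ hcee)
  have hne : ‖e‖ ≤ 1 := (CStarAlgebra.norm_le_one_iff_of_nonneg e he0).2 he1
  have hn : ‖c - c * e * e‖ ≤ 2 * (ε / (2 * |M| + 1)) := by
    have heq : c - c * e * e = (c - c * e) + (c - c * e) * e := by noncomm_ring
    rw [heq]
    have h1 := norm_add_le (c - c * e) ((c - c * e) * e)
    have h2 := norm_mul_le (c - c * e) e
    have h3 := mul_le_mul_of_nonneg_left hne (norm_nonneg (c - c * e))
    linarith
  rw [mul_assoc, hφ.2.2.2.2 e he _ hce, ← hφ.map_sub hIsmul hc hcee]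
  refine (hM _ hsub).trans ((mul_le_mul (le_abs_self M) hn (norm_nonneg _) (abs_nonneg _)).trans ?_)
  have : |M| * (2 * (ε / (2 * |M| + 1))) = (2 * |M| * ε) / (2 * |M| + 1) := by ring
  rw [this, div_le_iff₀ hK]
  nlinarith

open scoped ComplexOrder in
/-- Positive linear functionals on a C⋆-algebra are bounded, in unbundled form. -/
theorem exists_bound_of_positive {A : Type*} [CStarAlgebra A] [PartialOrder A] [StarOrderedRing A]
    (σ : A → ℂ) (hadd : ∀ x y, σ (x + y) = σ x + σ y) (hsmul : ∀ (z : ℂ) x, σ (z • x) = z * σ x)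
    (hpos : ∀ x, 0 ≤ (σ (star x * x)).re ∧ (σ (star x * x)).im = 0) :
    ∃ M : ℝ, ∀ x, ‖σ x‖ ≤ M * ‖x‖ := by
  let L : A →ₗ[ℂ] ℂ := { toFun := σ, map_add' := hadd, map_smul' := fun z x => hsmul z x }
  let P : A →ₚ[ℂ] ℂ := PositiveLinearMap.mk₀ L fun x hx => by
    obtain ⟨y, rfl⟩ := CStarAlgebra.nonneg_iff_eq_star_mul_self.1 hx
    exact Complex.nonneg_iff.2 ⟨(hpos y).1, (hpos y).2.symm⟩
  obtain ⟨C, hC⟩ := PositiveLinearMap.exists_norm_apply_le P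
  exact ⟨C, hC⟩

/-- Exel–Laca type trace extension. Let `A` be a unital C*-algebra, `B` a
closed *-subalgebra containing the unit, and `I` a closed two-sided ideal with `A = B + I`.
Let `τ` be a finite trace on `B` and `φ` a finite trace on `I`.  If (1) `φ = τ` on `B ∩ I` and
(2) `φ(x^{1/2}·u·x^{1/2}) ≤ τ(x)` for every positive `x ∈ B` and every `u ∈ I` with
`0 ≤ u ≤ 1`, then there is a unique finite trace on `A` extending `τ` and `φ`.  Conversely,
the restrictions of any finite trace on `A` to `B` and `I` satisfy (1) and (2). -/
theorem trace_extension
    {A : Type*} [CStarAlgebra A] [PartialOrder A] [StarOrderedRing A]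
    (B : Set A) (hB1 : (1 : A) ∈ B) (hBclosed : IsClosed B)
    (hBadd : ∀ x ∈ B, ∀ y ∈ B, x + y ∈ B)
    (hBmul : ∀ x ∈ B, ∀ y ∈ B, x * y ∈ B)
    (hBstar : ∀ x ∈ B, star x ∈ B)
    (hBsmul : ∀ z : ℂ, ∀ x ∈ B, z • x ∈ B)
    (I : Set A) (hIclosed : IsClosed I) (hI0 : (0 : A) ∈ I)
    (hIadd : ∀ x ∈ I, ∀ y ∈ I, x + y ∈ I)
    (hIsmul : ∀ z : ℂ, ∀ x ∈ I, z • x ∈ I)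
    (hIabs : ∀ a ∈ I, ∀ x : A, x * a ∈ I ∧ a * x ∈ I)
    (hsum : ∀ x : A, ∃ b ∈ B, ∃ i ∈ I, x = b + i)
    (τ φ : A → ℂ)
    (hτ : IsFiniteTraceOn B τ) (hφ : IsFiniteTraceOn I φ) :
    (((∀ x ∈ B ∩ I, φ x = τ x) ∧
        (∀ x ∈ B, 0 ≤ x → ∀ u ∈ I, 0 ≤ u → u ≤ 1 →
          (φ (CFC.sqrt x * u * CFC.sqrt x)).re ≤ (τ x).re)) →
      ∃! σ : A → ℂ, IsFiniteTraceOn Set.univ σ ∧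
        (∀ x ∈ B, σ x = τ x) ∧ (∀ x ∈ I, σ x = φ x)) ∧
    (∀ σ : A → ℂ, IsFiniteTraceOn Set.univ σ →
      (∀ x ∈ B ∩ I, σ x = σ x) ∧
      (∀ x ∈ B, 0 ≤ x → ∀ u ∈ I, 0 ≤ u → u ≤ 1 →
        (σ (CFC.sqrt x * u * CFC.sqrt x)).re ≤ (σ x).re)) := by
  constructor
  · rintro ⟨h1, h2⟩
    obtain ⟨τadd, τsmul, -, τpos, τcomm⟩ := id hτ
    obtain ⟨φadd, φsmul, -, φpos, φcomm⟩ := id hφ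
    have hstarI : ∀ x ∈ I, star x ∈ I := fun x hx => ideal_star_mem I hIclosed hIabs hx
    have hcommI : ∀ a : A, ∀ i ∈ I, φ (a * i) = φ (i * a) := fun a i hi =>
      trace_ideal_comm I hIadd hIsmul hIabs hφ a hi
    choose p hp q hq hpq using hsum
    obtain ⟨σ, hσ⟩ : ∃ σ : A → ℂ, ∀ b ∈ B, ∀ i ∈ I, σ (b + i) = τ b + φ i := by
      refine ⟨fun x => τ (p x) + φ (q x), fun b hb i hi => ?_⟩
      change τ (p (b + i)) + φ (q (b + i)) = τ b + φ i
      have hx := hpq (b + i)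
      have hpB := hp (b + i)
      have hqI := hq (b + i)
      generalize p (b + i) = p' at *
      generalize q (b + i) = q' at *
      have hd : p' - b = i - q' := by
        rw [sub_eq_sub_iff_add_eq_add, ← hx, add_comm]
      have hdB : p' - b ∈ B := by
        rw [sub_eq_add_neg, ← neg_one_smul ℂ b]
        exact hBadd _ hpB _ (hBsmul _ b hb)
      have hdI : p' - b ∈ I := by
        rw [hd, sub_eq_add_neg, ← neg_one_smul ℂ q']
        exact hIadd _ hi _ (hIsmul _ q' hqI)
      have h := h1 _ ⟨hdB, hdI⟩
      rw [hτ.map_sub hBsmul hpB hb, hd, hφ.map_sub hIsmul hi hqI] at h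
      linear_combination -h
    have hB0 : (0 : A) ∈ B := by simpa using hBsmul 0 1 hB1
    have hτ0 : τ 0 = 0 := by simpa using τsmul 0 1 hB1
    have hφ0 : φ 0 = 0 := by simpa using φsmul 0 0 hI0
    have hσB : ∀ x ∈ B, σ x = τ x := fun x hx => by
      simpa [hφ0] using hσ x hx 0 hI0
    have hσI : ∀ x ∈ I, σ x = φ x := fun x hx => by
      simpa [hτ0] using hσ 0 hB0 x hx
    have σadd : ∀ x y, σ (x + y) = σ x + σ y := fun x y => by
      rw [hpq x, hpq y, add_add_add_comm,
        hσ _ (hBadd _ (hp x) _ (hp y)) _ (hIadd _ (hq x) _ (hq y)),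
        hσ _ (hp x) _ (hq x), hσ _ (hp y) _ (hq y), τadd _ (hp x) _ (hp y),
        φadd _ (hq x) _ (hq y)]
      ring
    have σsmul : ∀ (z : ℂ) x, σ (z • x) = z * σ x := fun z x => by
      rw [hpq x, smul_add, hσ _ (hBsmul z _ (hp x)) _ (hIsmul z _ (hq x)),
        hσ _ (hp x) _ (hq x), τsmul z _ (hp x), φsmul z _ (hq x)]
      ring
    have σcommI : ∀ a : A, ∀ i ∈ I, σ (a * i) = σ (i * a) := fun a i hi => by
      rw [hσI _ (hIabs i hi a).1, hσI _ (hIabs i hi a).2, hcommI a i hi]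
    have σcomm : ∀ x y, σ (x * y) = σ (y * x) := fun x y => by
      have hbb : σ (p x * p y) = σ (p y * p x) := by
        rw [hσB _ (hBmul _ (hp x) _ (hp y)), hσB _ (hBmul _ (hp y) _ (hp x)),
          τcomm _ (hp x) _ (hp y)]
      have hl : σ (x * y) = σ (p x * p y) + σ (p x * q y) + σ (q x * y) := by
        rw [← σadd, ← σadd, ← mul_add, ← hpq y, ← add_mul, ← hpq x]
      have hr : σ (y * x) = σ (p y * p x) + σ (q y * p x) + σ (y * q x) := by
        rw [← σadd, ← σadd, ← add_mul, ← hpq y, ← mul_add, ← hpq x]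
      rw [hl, hr, hbb, σcommI _ _ (hq y), σcommI y _ (hq x)]
    have σpos : ∀ x, 0 ≤ (σ (star x * x)).re ∧ (σ (star x * x)).im = 0 := by
      intro a
      obtain ⟨b, hb, i, hi, rfl⟩ : ∃ b ∈ B, ∃ i ∈ I, a = b + i :=
        ⟨p a, hp a, q a, hq a, hpq a⟩
      have hbb : star b * b ∈ B := hBmul _ (hBstar b hb) _ hb
      -- `c` is the part of `(b + i)⋆ (b + i)` lying in the ideal.
      obtain ⟨c, hc⟩ : ∃ c, c = star b * i + star i * (b + i) := ⟨_, rfl⟩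
      have hcI : c ∈ I := by
        rw [hc]
        exact hIadd _ (hIabs i hi _).1 _ (hIabs _ (hstarI i hi) _).2
      have hexp : star (b + i) * (b + i) = star b * b + c := by
        rw [hc, star_add]
        noncomm_ring
      have hbound : ∀ ε > 0, -ε ≤ (σ (star (b + i) * (b + i))).re ∧
          |(σ (star (b + i) * (b + i))).im| ≤ ε := by
        intro ε hε
        obtain ⟨e, he, he0, he1, hle⟩ :=
          exists_compression_approx I hIadd hIsmul hIabs hφ hcI hε
        have hes : star e = e := he0.isSelfAdjoint.star_eq
        have hbe := φpos (b * e) (hIabs e he b).1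
        have hae := φpos ((b + i) * e) (hIabs e he _).1
        have hb1 : star (b * e) * (b * e) = e * (star b * b) * e := by
          simp only [star_mul, hes, mul_assoc]
        have ha1 : star ((b + i) * e) * ((b + i) * e) =
            e * (star b * b) * e + e * c * e := by
          rw [star_mul, hes]
          calc e * star (b + i) * ((b + i) * e) = e * (star (b + i) * (b + i)) * e := by
                simp only [mul_assoc]
            _ = _ := by rw [hexp, mul_add, add_mul]
        rw [hb1] at hbe
        rw [ha1, φadd _ (hIabs e he _).1 _ (hIabs e he _).1] at hae
        have hee0 : 0 ≤ e * e := by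
          simpa only [hes] using star_mul_self_nonneg e
        have hee1 : e * e ≤ 1 := by
          simpa [sq] using CStarAlgebra.pow_antitone he0 he1 (Nat.zero_le 2)
        have hsq : CFC.sqrt (star b * b) * CFC.sqrt (star b * b) = star b * b :=
          CFC.sqrt_mul_sqrt_self _ (star_mul_self_nonneg b)
        have h3 := h2 _ hbb (star_mul_self_nonneg b) (e * e) (hIabs e he e).1 hee0 hee1
        have hmove : φ (CFC.sqrt (star b * b) * (e * e) * CFC.sqrt (star b * b)) =
            φ (e * (star b * b) * e) := by
          rw [← hcommI _ _ (hIabs _ (hIabs e he e).1 _).1, ← mul_assoc, hsq, ← mul_assoc,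
            φcomm _ (hIabs e he _).1 e he, ← mul_assoc]
        rw [hmove] at h3
        have hτb := τpos b hb
        have hre := (Complex.abs_re_le_norm _).trans hle
        have him := (Complex.abs_im_le_norm _).trans hle
        rw [Complex.sub_re, abs_le] at hre
        rw [Complex.sub_im, abs_le] at him
        rw [Complex.add_re, Complex.add_im] at hae
        rw [hexp, hσ _ hbb _ hcI, Complex.add_re, Complex.add_im, abs_le]
        refine ⟨by linarith [hae.1], by linarith [hae.2, hbe.2], by linarith [hae.2, hbe.2]⟩
      constructor
      · refine le_of_forall_pos_le_add fun ε hε => ?_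
        linarith [(hbound ε hε).1]
      · refine abs_nonpos_iff.1 (le_of_forall_pos_le_add fun ε hε => ?_)
        linarith [(hbound ε hε).2]
    obtain ⟨M, hM⟩ := exists_bound_of_positive σ σadd σsmul σpos
    refine ⟨σ, ⟨⟨fun x _ y _ => σadd x y, fun z x _ => σsmul z x, ⟨M, fun x _ => hM x⟩,
      fun x _ => σpos x, fun x _ y _ => σcomm x y⟩, hσB, hσI⟩, ?_⟩
    rintro σ' ⟨hσ', hB', hI'⟩
    funext x
    rw [hpq x, hσ'.1 _ (Set.mem_univ _) _ (Set.mem_univ _), hB' _ (hp x), hI' _ (hq x),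
      hσ _ (hp x) _ (hq x)]
  · intro σ hσ
    refine ⟨fun _ _ => rfl, fun x _ hx0 u _ _ hu1 => ?_⟩
    have hs : IsSelfAdjoint (CFC.sqrt x) := (CFC.sqrt_nonneg x).isSelfAdjoint
    obtain ⟨y, hy⟩ := CStarAlgebra.nonneg_iff_eq_star_mul_self.1 (sub_nonneg.2 hu1)
    have hpos := (hσ.2.2.2.1 (y * CFC.sqrt x) (Set.mem_univ _)).1
    have heq : star (y * CFC.sqrt x) * (y * CFC.sqrt x) =
        x - CFC.sqrt x * u * CFC.sqrt x := by
      calc star (y * CFC.sqrt x) * (y * CFC.sqrt x)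
          = CFC.sqrt x * (star y * y) * CFC.sqrt x := by
            simp only [star_mul, hs.star_eq, mul_assoc]
        _ = CFC.sqrt x * CFC.sqrt x - CFC.sqrt x * u * CFC.sqrt x := by
            rw [← hy]
            noncomm_ring
        _ = _ := by rw [CFC.sqrt_mul_sqrt_self x hx0]
    rw [heq, hσ.map_sub (fun _ _ _ => Set.mem_univ _) (Set.mem_univ _) (Set.mem_univ _),
      Complex.sub_re] at hpos
    linarith
end
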